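/- arXiv:2405.03313 — 6 statements merged into one kernel-verified Lean document; each statement's English description precedes it below -/
import Mathlib

section
/- Let m ≥ 1 be an integer and let P_m(λ) = λ⁴ + (10m+72)λ³ + (25m²+286m+480)λ² + (−36m³+327m²−924m+588)λ − 216m⁴. Then P_m(λ) > 0 for every real number λ ≥ 4m. (Consequently the normal-stability quadratic form of the small 4-harmonic hypersphere is positive on every eigenfunction of the Laplacian with non-zero eigenvalue.) -/
/-- For every integer `m ≥ 1`, the polynomial
`P_m(λ) = λ⁴ + (10m+72)λ³ + (25m²+286m+480)λ² + (−36m³+327m²−924m+588)λ − 216m⁴`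
is strictly positive for every real `λ ≥ 4m`. -/
theorem stmt_2 (m : ℤ) (hm : 1 ≤ m) (P : ℝ → ℝ)
    (hP : P = fun l : ℝ => l^4 + (10*(m:ℝ)+72)*l^3 + (25*(m:ℝ)^2+286*(m:ℝ)+480)*l^2 + (-36*(m:ℝ)^3+327*(m:ℝ)^2-924*(m:ℝ)+588)*l - 216*(m:ℝ)^4) :
    ∀ l : ℝ, 4*(m:ℝ) ≤ l → 0 < P l := by
  intro l hl
  have hm0 : (0 : ℝ) < m := by exact_mod_cast hm
  -- Shift to the left endpoint: in `t = l - 4m ≥ 0` every coefficient is a polynomial in `m`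
  -- with nonnegative coefficients, and the constant term is strictly positive.
  obtain ⟨t, ht, rfl⟩ : ∃ t : ℝ, 0 ≤ t ∧ l = 4 * (m : ℝ) + t :=
    ⟨l - 4 * m, sub_nonneg.mpr hl, by ring⟩
  have key : P (4 * (m : ℝ) + t) =
      t^4 + (26*(m:ℝ) + 72)*t^3 + (241*(m:ℝ)^2 + 1150*(m:ℝ) + 480)*t^2
        + (900*(m:ℝ)^3 + 6071*(m:ℝ)^2 + 2916*(m:ℝ) + 588)*t
        + (936*(m:ℝ)^4 + 10492*(m:ℝ)^3 + 3984*(m:ℝ)^2 + 2352*(m:ℝ)) := by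
    rw [hP]
    ring
  rw [key]
  positivity
end

section
/- Let m ≥ 1 be an integer and let P_m(λ) = λ⁴ + (10m+72)λ³ + (25m²+286m+480)λ² + (−36m³+327m²−924m+588)λ − 216m⁴. Then for every integer j ≥ 0, setting λ_j = 4j(j+m−1), one has P_m(λ_j) < 0 if and only if j = 0. (This is the computational content of Theorem 3.9: the normal index of the small proper 4-harmonic hypersphere S^m(1/2) ⊂ S^{m+1} equals one.) -/
/-! For `j = 0` the value is `P 0 = -216 m⁴ < 0`. For `j ≥ 1`,
`λ_j = 4m + 4(j-1)(j+m) ≥ 4m`, and the Taylor expansion of `P` at `4m` has only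
nonnegative coefficients when `m ≥ 0`, so `P` is nonnegative on `[4m, ∞)`. -/

/-- For every integer `m ≥ 1` and every integer `j ≥ 0`, setting
`λ_j = 4j(j+m−1)`, the polynomial
`P_m(λ) = λ⁴ + (10m+72)λ³ + (25m²+286m+480)λ² + (−36m³+327m²−924m+588)λ − 216m⁴`
satisfies `P_m(λ_j) < 0` if and only if `j = 0`. -/
theorem stmt_3 (m : ℤ) (hm : 1 ≤ m) (P : ℝ → ℝ)
    (hP : P = fun l : ℝ => l^4 + (10*(m:ℝ)+72)*l^3 + (25*(m:ℝ)^2+286*(m:ℝ)+480)*l^2 + (-36*(m:ℝ)^3+327*(m:ℝ)^2-924*(m:ℝ)+588)*l - 216*(m:ℝ)^4) :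
    ∀ j : ℤ, 0 ≤ j → (P (4*(j:ℝ)*((j:ℝ)+(m:ℝ)-1)) < 0 ↔ j = 0) := by
  have hm' : (1:ℝ) ≤ m := by exact_mod_cast hm
  generalize (m:ℝ) = x at hP hm' ⊢
  have hx : 0 < x := by linarith
  intro j hj
  subst hP
  constructor
  · intro h
    by_contra hne
    have hj1 : (1:ℝ) ≤ j := by exact_mod_cast (show 1 ≤ j by omega)
    have ht : 0 ≤ 4 * ((j:ℝ) - 1) * (j + x) :=
      mul_nonneg (by linarith) (by linarith)
    have e : 4 * (j:ℝ) * (j + x - 1) = 4 * x + 4 * ((j:ℝ) - 1) * (j + x) := by ring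
    simp only [e] at h
    generalize 4 * ((j:ℝ) - 1) * (j + x) = t at h ht
    -- expanded in `x` and `t`, every monomial has a positive coefficient
    ring_nf at h
    apply absurd h
    rw [not_lt]
    positivity
  · rintro rfl
    have : 0 < x ^ 4 := by positivity
    simp
    exact this
end

section
/- Let m ≥ 1 be an integer and let P_m(λ) = λ⁴ + (10m+72)λ³ + (25m²+286m+480)λ² + (−36m³+327m²−924m+588)λ − 216m⁴. Then the derivative P_m′(λ) = 4λ³ + (30m+216)λ² + (50m²+572m+960)λ + (−36m³+327m²−924m+588) is strictly positive for every real λ ≥ 4m. -/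
/-- For every integer `m ≥ 1`, the derivative
`P_m′(λ) = 4λ³ + (30m+216)λ² + (50m²+572m+960)λ + (−36m³+327m²−924m+588)`
of `P_m` is strictly positive for every real `λ ≥ 4m`. -/
theorem stmt_4 (m : ℤ) (hm : 1 ≤ m) (P' : ℝ → ℝ)
    (hP' : P' = fun l : ℝ => 4*l^3 + (30*(m:ℝ)+216)*l^2 + (50*(m:ℝ)^2+572*(m:ℝ)+960)*l
      + (-36*(m:ℝ)^3+327*(m:ℝ)^2-924*(m:ℝ)+588)) :
    ∀ l : ℝ, 4*(m:ℝ) ≤ l → 0 < P' l := by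
  intro l hl
  have hm0 : (0:ℝ) < m := by exact_mod_cast (by lia : 0 < m)
  -- With `l = 4m + t`, `t ≥ 0`, every coefficient of the polynomial in `m` and `t` is positive.
  obtain ⟨t, ht, rfl⟩ : ∃ t : ℝ, 0 ≤ t ∧ l = 4*(m:ℝ) + t := ⟨l - 4*m, by linarith, by ring⟩
  have key : P' (4*(m:ℝ) + t) = 4*t^3 + (78*(m:ℝ)+216)*t^2 + (482*(m:ℝ)^2+2300*(m:ℝ)+960)*t
      + (900*(m:ℝ)^3+6071*(m:ℝ)^2+2916*(m:ℝ)+588) := by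
    rw [hP']; ring
  rw [key]
  positivity
end

section
/- Let m ≥ 1 be an integer and let P_m(λ) = λ⁴ + (10m+72)λ³ + (25m²+286m+480)λ² + (−36m³+327m²−924m+588)λ − 216m⁴. Then P_m is strictly monotone increasing on the interval [4m, ∞), i.e. for all real numbers λ, μ with 4m ≤ λ < μ one has P_m(λ) < P_m(μ). -/
/-!
Writing `λ = 4m + a` and `μ = 4m + a + d` with `a ≥ 0` and `d > 0`, the difference
`P_m(μ) - P_m(λ)` is `d` times a polynomial in `m, a, d`. The Taylor expansion of `P_m` at `4m`
shows that every coefficient of that polynomial is positive: the only negative terms of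
positive degree in `λ`, those in the linear coefficient of `P_m`, are outweighed, since the
derivative of `P_m` at `4m` is `900m³ + 6071m² + 2916m + 588`.
-/

/-- For every integer `m ≥ 1`, the polynomial
`P_m(λ) = λ⁴ + (10m+72)λ³ + (25m²+286m+480)λ² + (−36m³+327m²−924m+588)λ − 216m⁴`
is strictly monotone increasing on `[4m, ∞)`. -/
theorem stmt_5 (m : ℤ) (hm : 1 ≤ m) (P : ℝ → ℝ)
    (hP : P = fun l : ℝ => l^4 + (10*(m:ℝ)+72)*l^3 + (25*(m:ℝ)^2+286*(m:ℝ)+480)*l^2 + (-36*(m:ℝ)^3+327*(m:ℝ)^2-924*(m:ℝ)+588)*l - 216*(m:ℝ)^4) :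
    ∀ l mu : ℝ, 4*(m:ℝ) ≤ l → l < mu → P l < P mu := by
  intro l mu hl hlt
  have hm0 : (0:ℝ) < m := by exact_mod_cast (by omega : 0 < m)
  subst hP
  obtain ⟨a, rfl⟩ : ∃ a, l = 4*(m:ℝ) + a := ⟨l - 4*m, by ring⟩
  obtain ⟨d, rfl⟩ : ∃ d, mu = 4*(m:ℝ) + a + d := ⟨mu - (4*m + a), by ring⟩
  have ha : 0 ≤ a := by linarith
  have hd : 0 < d := by linarith
  generalize (m:ℝ) = x at *
  -- The coefficients of `1, d, d^2, d^3` in the second factor are the Taylor coefficients of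
  -- orders 1 to 4 of the polynomial at `4x + a`, expanded in powers of `a`.
  have key : 0 < d * ((900*x^3 + 6071*x^2 + 2916*x + 588
        + a*(482*x^2 + 2300*x + 960) + a^2*(78*x + 216) + 4*a^3)
      + d*(241*x^2 + 1150*x + 480 + a*(78*x + 216) + 6*a^2)
      + d^2*(26*x + 72 + 4*a)
      + d^3) := by positivity
  rw [← sub_pos]
  refine key.trans_eq ?_
  ring
end

section
/- Let m ≥ 1 be an integer and let P^{ES}_m(λ) = λ⁴ + (10m+72)λ³ + (25m²+286m+480)λ² + (−33m³+312m²−900m+576)λ − 216m⁴. Then P^{ES}_m(λ) > 0 for every real number λ ≥ 4m. (Consequently the ES-4 normal-stability quadratic form of the small ES-4-harmonic hypersphere is positive on every eigenfunction of the Laplacian with non-zero eigenvalue.) -/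
/-- For every integer `m ≥ 1`, the polynomial
`P^{ES}_m(λ) = λ⁴ + (10m+72)λ³ + (25m²+286m+480)λ² + (−33m³+312m²−900m+576)λ − 216m⁴`
is strictly positive for every real `λ ≥ 4m`. -/
theorem stmt_10 (m : ℤ) (hm : 1 ≤ m) (P : ℝ → ℝ)
    (hP : P = fun l : ℝ => l^4 + (10*(m:ℝ)+72)*l^3 + (25*(m:ℝ)^2+286*(m:ℝ)+480)*l^2 + (-33*(m:ℝ)^3+312*(m:ℝ)^2-900*(m:ℝ)+576)*l - 216*(m:ℝ)^4) :
    ∀ l : ℝ, 4*(m:ℝ) ≤ l → 0 < P l := by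
  intro l hl
  have hx : (0 : ℝ) < m := by exact_mod_cast hm
  subst hP
  generalize (m : ℝ) = x at *
  -- Expanding at the endpoint `4 * x`, every coefficient in `s = l - 4 * x` and `x` is positive:
  -- the negative terms of the polynomial are absorbed by the positive ones.
  obtain ⟨s, hs, rfl⟩ : ∃ s : ℝ, 0 ≤ s ∧ l = 4 * x + s :=
    ⟨l - 4 * x, sub_nonneg.mpr hl, by ring⟩
  have key : 0 < s^4 + (26*x+72)*s^3 + (241*x^2+1150*x+480)*s^2
      + (903*x^3+6056*x^2+2940*x+576)*s
      + (948*x^4+10432*x^3+4080*x^2+2304*x) := by positivity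
  linear_combination key
end

section
/- Let m ≥ 1 be an integer and let P^{ES}_m(λ) = λ⁴ + (10m+72)λ³ + (25m²+286m+480)λ² + (−33m³+312m²−900m+576)λ − 216m⁴. Then for every integer j ≥ 0, setting λ_j = 4j(j+m−1), one has P^{ES}_m(λ_j) < 0 if and only if j = 0. (This is the computational content of Theorem 4.9: the normal index of the small proper ES-4-harmonic hypersphere S^m(1/2) ⊂ S^{m+1} equals one.) -/
/-!
At `j = 0` the eigenvalue vanishes and `P 0 = -216 m⁴ < 0`. For `j ≥ 1` one has
`λ_j = 4m + t` with `t = 4(j-1)(j+m) ≥ 0`, so `λ_j` is at least the first nonzero eigenvalue `4m`.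
The Taylor expansion of `P` at `4m` has coefficients in `t` that are polynomials in `m` with
nonnegative coefficients, so
`P (λ_j) ≥ 0`.
-/

/-- For every integer `m ≥ 1` and every integer `j ≥ 0`, setting
`λ_j = 4j(j+m−1)`, the polynomial
`P^{ES}_m(λ) = λ⁴ + (10m+72)λ³ + (25m²+286m+480)λ² + (−33m³+312m²−900m+576)λ − 216m⁴`
satisfies `P^{ES}_m(λ_j) < 0` if and only if `j = 0`. -/
theorem stmt_11 (m : ℤ) (hm : 1 ≤ m) (P : ℝ → ℝ)
    (hP : P = fun l : ℝ => l^4 + (10*(m:ℝ)+72)*l^3 + (25*(m:ℝ)^2+286*(m:ℝ)+480)*l^2 + (-33*(m:ℝ)^3+312*(m:ℝ)^2-900*(m:ℝ)+576)*l - 216*(m:ℝ)^4) :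
    ∀ j : ℤ, 0 ≤ j → (P (4*(j:ℝ)*((j:ℝ)+(m:ℝ)-1)) < 0 ↔ j = 0) := by
  subst hP
  intro j hj
  have hm' : (1:ℝ) ≤ m := by exact_mod_cast hm
  constructor
  · intro h
    by_contra hne
    have hj1 : 1 ≤ j := by omega
    have hj' : (1:ℝ) ≤ j := by exact_mod_cast hj1
    obtain ⟨t, ht⟩ : ∃ t : ℝ, t = 4*((j:ℝ)-1)*((j:ℝ)+m) := ⟨_, rfl⟩
    have ht0 : 0 ≤ t := by
      rw [ht]
      exact mul_nonneg (by linarith) (by linarith)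
    have hl : 4*(j:ℝ)*((j:ℝ)+(m:ℝ)-1) = 4*m + t := by rw [ht]; ring
    rw [hl] at h
    have hm0 : (0:ℝ) ≤ m := by linarith
    have key : 0 ≤ t^4 + (26*(m:ℝ)+72)*t^3 + (241*(m:ℝ)^2+1150*m+480)*t^2
        + (903*(m:ℝ)^3+6056*(m:ℝ)^2+2940*m+576)*t
        + (948*(m:ℝ)^4+10432*(m:ℝ)^3+4080*(m:ℝ)^2+2304*m) := by positivity
    refine absurd h (not_lt.mpr (key.trans_eq ?_))
    ring
  · rintro rfl
    have : (0:ℝ) < (m:ℝ)^4 := by positivity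
    norm_num
    exact this
end
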